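/- arXiv:1309.5588 — 2 statements merged into one kernel-verified Lean document; each statement's English description precedes it below -/
import Mathlib

section
/- Let S be a finite subdirectly irreducible commutative semigroup. Then E(S) ≤ D(S) + κ(S) − 1. -/
namespace EGZ

variable {S : Type}

/-- `rep a n = (n+1)·a`, the (n+1)-fold sum of `a` with itself (defined for semigroups,
where the 0-fold sum is unavailable). -/
def rep [AddCommSemigroup S] (a : S) : ℕ → S
  | 0 => a
  | n + 1 => rep a n + a

/-- The sum of all terms of a sequence (= multiset) over the semigroup `S`, computed in
`WithZero S` (i.e. `S` with an extra identity element `0` adjoined); the empty sequence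
has sum `0`, and a nonempty sequence has sum `↑s` where `s ∈ S` is its genuine sum. -/
def mSum [AddCommSemigroup S] (T : Multiset S) : WithZero S :=
  (T.map (fun s => (s : WithZero S))).sum

/-- `σ(A) = σ(B)`, with the paper's convention: the empty sequence is regarded as having
sum equal to the identity element `e` of `S`, whenever `S` has an identity element. -/
def EqSum [AddCommSemigroup S] (A B : Multiset S) : Prop :=
  mSum A = mSum B ∨
    ∃ e : S, (∀ a : S, e + a = a) ∧
      ((mSum A = 0 ∧ mSum B = (e : WithZero S)) ∨
        (mSum A = (e : WithZero S) ∧ mSum B = 0))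

/-- A sequence `T` over `S` is reducible if some proper subsequence `B` of `T`
satisfies `σ(B) = σ(T)`. -/
def Reducible [AddCommSemigroup S] (T : Multiset S) : Prop :=
  ∃ B : Multiset S, B < T ∧ EqSum B T

/-- The (large) Davenport constant `D(S)`: the smallest `ℓ` such that every sequence over
`S` of length at least `ℓ` is reducible. -/
noncomputable def DavC (S : Type) [AddCommSemigroup S] : ℕ :=
  sInf {ℓ : ℕ | ∀ T : Multiset S, ℓ ≤ Multiset.card T → Reducible T}

/-- The property defining the small Davenport constant: `ℓ` is admissible if for every `m`
and every `c₁, …, c_m ∈ S` there is `J ⊆ [1, m]` with `|J| ≤ ℓ` and `Σ_{j=1}^m c_j = Σ_{j∈J} c_j`. -/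
def SmallDavProp (S : Type) [AddCommSemigroup S] (ℓ : ℕ) : Prop :=
  ∀ (m : ℕ) (c : Fin m → S), ∃ J : Finset (Fin m),
    J.card ≤ ℓ ∧ EqSum (J.val.map c) ((Finset.univ : Finset (Fin m)).val.map c)

/-- The small Davenport constant `d(S)`. -/
noncomputable def smallDavC (S : Type) [AddCommSemigroup S] : ℕ :=
  sInf {ℓ : ℕ | SmallDavProp S ℓ}

/-- The period of an element `a ∈ S`: the least `t > 0` such that `r·a = (r+t)·a`
for some `r > 0`. -/
noncomputable def period [AddCommSemigroup S] (a : S) : ℕ :=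
  sInf {t : ℕ | 0 < t ∧ ∃ k : ℕ, rep a (k + t) = rep a k}

/-- `exp(S)`: the least common multiple of the periods of all elements of `S`. -/
noncomputable def expS (S : Type) [AddCommSemigroup S] [Fintype S] : ℕ :=
  (Finset.univ : Finset S).lcm (fun a => period a)

/-- `κ(S) = ⌈|S| / exp(S)⌉ · exp(S)`. -/
noncomputable def kappa (S : Type) [AddCommSemigroup S] [Fintype S] : ℕ :=
  ((Fintype.card S + expS S - 1) / expS S) * expS S

/-- `E(S)`: the smallest positive integer `ℓ` such that every sequence `T` over `S` of
length at least `ℓ` contains a subsequence `T'` with `|T| - |T'| = κ(S)` and `σ(T') = σ(T)`. -/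
noncomputable def EC (S : Type) [AddCommSemigroup S] [Fintype S] : ℕ :=
  sInf {ℓ : ℕ | 0 < ℓ ∧ ∀ T : Multiset S, ℓ ≤ Multiset.card T →
    ∃ B : Multiset S, B ≤ T ∧ Multiset.card T - Multiset.card B = kappa S ∧ EqSum B T}

end EGZ

/-- A commutative semigroup `S` is subdirectly irreducible: whenever `S` is expressed as a
subdirect product of a family of commutative semigroups (an injective additive map into a
product all of whose component projections are surjective), one of the projections is
already injective — hence, being a surjective additive bijection, an isomorphism. -/
def SubdirectlyIrreducible (S : Type) [AddCommSemigroup S] : Prop :=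
  ∀ (ι : Type) (A : ι → Type) [∀ i, AddCommSemigroup (A i)] (φ : S → ∀ i, A i),
    Function.Injective φ →
    (∀ a b : S, φ (a + b) = φ a + φ b) →
    (∀ i, Function.Surjective fun s => φ s i) →
    ∃ i, Function.Injective fun s => φ s i


/-!
In a subdirectly irreducible `S`, an idempotent `e` is an identity or absorbing: the kernel of
translation by `e` and the Rees congruence of the ideal `e + S` meet trivially, so one of them is
equality. As every element of the finite semigroup `S` has an idempotent multiple, each element of
`S¹` is either a unit or nilpotent.

Let `x` be the sum of the non-unit terms of a sequence `T` of length at least `D(S) + κ(S) - 1`. If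
`σ(T)` is absorbing, a subsequence of fewer than `D(S)` terms already has this sum, and so does
every subsequence of `T` containing it. Otherwise let `K` be the group of units of `S¹` modulo the
stabilizer of `x`. A sequence of units without a nonempty zero-sum subsequence in `K` stays
irreducible in `S¹` when the non-units of `T` are appended, whence
`D(K) ≤ D(S) - #(non-units of T)`. Since `κ(S) ≥ |K|` is a multiple of the exponent of `K`, Gao's
theorem yields `κ(S)` units in `T` whose sum fixes `x`, and they can be removed.

Gao's theorem is derived from the Kemperman–Scherk theorem on sumsets: if no multiplicity in a
sequence of length at least `|G|` exceeds `h`, then it has a nonempty zero-sum subsequence of length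
at most `h`.
-/

namespace EGZ

section Multiset

variable {α β : Type*}

theorem exists_le_map_eq_of_le_map {f : α → β} {U : Multiset α} {V : Multiset β}
    (h : V ≤ U.map f) : ∃ V' ≤ U, V'.map f = V := by
  have hV : V ∈ (U.map f).powersetCard V.card := Multiset.mem_powersetCard.2 ⟨h, rfl⟩
  rw [Multiset.powersetCard_map, Multiset.mem_map] at hV
  obtain ⟨V', hV', hmap⟩ := hV
  exact ⟨V', (Multiset.mem_powersetCard.1 hV').1, hmap⟩

theorem exists_le_le_card_eq {A T : Multiset α} (h : A ≤ T) {m : ℕ} (hA : A.card ≤ m)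
    (hT : m ≤ T.card) : ∃ B, A ≤ B ∧ B ≤ T ∧ B.card = m := by
  obtain ⟨R, rfl⟩ := Multiset.le_iff_exists_add.1 h
  rw [Multiset.card_add] at hT
  obtain ⟨R', hR'⟩ : ∃ R', R' ∈ R.powersetCard (m - A.card) := by
    rw [← Multiset.card_pos_iff_exists_mem, Multiset.card_powersetCard]
    exact Nat.choose_pos (by lia)
  obtain ⟨hle, hcard⟩ := Multiset.mem_powersetCard.1 hR'
  exact ⟨A + R', Multiset.le_add_right _ _, by gcongr, by rw [Multiset.card_add]; lia⟩

theorem le_of_le_add_of_disjoint {C N W : Multiset α} (hCN : Disjoint C N) (h : C ≤ N + W) :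
    C ≤ W := by
  classical
  rw [Multiset.le_iff_count]
  intro a
  by_cases ha : a ∈ C
  · have hle := Multiset.count_le_of_le a h
    rwa [Multiset.count_add, Multiset.count_eq_zero_of_notMem (Multiset.disjoint_left.1 hCN ha),
      zero_add] at hle
  · rw [Multiset.count_eq_zero_of_notMem ha]
    exact Nat.zero_le _

theorem sum_card_filter_lt_count [DecidableEq α] {W : Multiset α} {h : ℕ}
    (hW : ∀ a, W.count a ≤ h) :
    ∑ i ∈ Finset.range h, {a ∈ W.toFinset | i < W.count a}.card = W.card := by
  have hfiber (a : α) : {i ∈ Finset.range h | i < W.count a} = Finset.range (W.count a) := by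
    ext i
    have := hW a
    simp only [Finset.mem_filter, Finset.mem_range]
    lia
  calc ∑ i ∈ Finset.range h, {a ∈ W.toFinset | i < W.count a}.card
      = ∑ a ∈ W.toFinset, {i ∈ Finset.range h | i < W.count a}.card := by
        simp only [Finset.card_filter]
        exact Finset.sum_comm
    _ = ∑ a ∈ W.toFinset, W.count a := by simp only [hfiber, Finset.card_range]
    _ = W.card := W.toFinset_sum_count_eq

end Multiset

section Sumset

open scoped Pointwise

variable {G : Type*} [AddCommGroup G]

theorem exists_add_notMem {A B : Finset G} (hA : 0 ∈ A)
    (hAB : ∀ a ∈ A, ∀ b ∈ B, a + b = 0 → b = 0) {b : G} (hb : b ∈ B) (hb0 : b ≠ 0) :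
    ∃ a ∈ A, a + b ∉ A := by
  classical
  by_contra! hadd
  have hsub : b +ᵥ A ⊆ A := by
    rintro _ hx
    obtain ⟨a, ha, rfl⟩ := Finset.mem_vadd_finset.1 hx
    rw [vadd_eq_add, add_comm]
    exact hadd a ha
  rw [← Finset.eq_of_subset_of_card_le hsub (Finset.card_vadd_finset b A).ge] at hA
  obtain ⟨a, ha, hba⟩ := Finset.mem_vadd_finset.1 hA
  exact hb0 (hAB a ha b hb ((add_comm a b).trans hba))

variable [DecidableEq G]

theorem mem_sum_finset {ι : Type*} {s : Finset ι} {A : ι → Finset G} {x : G} :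
    x ∈ ∑ i ∈ s, A i ↔ ∃ g : ι → G, (∀ i ∈ s, g i ∈ A i) ∧ ∑ i ∈ s, g i = x := by
  rw [← Finset.mem_coe, Finset.coe_sum, Set.mem_finsetSum]
  exact ⟨fun ⟨g, hg, hx⟩ ↦ ⟨g, fun _ hi ↦ hg hi, hx⟩,
    fun ⟨g, hg, hx⟩ ↦ ⟨g, fun {i} hi ↦ hg i hi, hx⟩⟩

/-- The Kemperman–Scherk theorem. -/
theorem card_add_card_le_card_add_add_one {A B : Finset G} (hA : 0 ∈ A) (hB : 0 ∈ B)
    (hAB : ∀ a ∈ A, ∀ b ∈ B, a + b = 0 → b = 0) :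
    A.card + B.card ≤ (A + B).card + 1 := by
  induction B using Finset.strongInduction generalizing A with
  | H B ih =>
  obtain rfl | ⟨b, hb, hb0⟩ : B = {0} ∨ ∃ b ∈ B, b ≠ 0 := by
    rw [or_iff_not_imp_right]
    intro h
    push Not at h
    exact Finset.eq_singleton_iff_unique_mem.2 ⟨hB, h⟩
  · simp
  obtain ⟨a, ha, hab⟩ := exists_add_notMem hA hAB hb hb0
  set A' := (Finset.addDysonETransform a (A, B)).1
  set B' := (Finset.addDysonETransform a (A, B)).2 with hB'
  have mem_B' {w : G} : w ∈ B' ↔ w ∈ B ∧ a + w ∈ A := by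
    simp [hB', Finset.mem_neg_vadd_finset_iff]
  have hssub : B' ⊂ B :=
    (Finset.ssubset_iff_of_subset fun w hw ↦ (mem_B'.1 hw).1).2
      ⟨b, hb, fun h ↦ hab (mem_B'.1 h).2⟩
  have hzero : ∀ y ∈ A', ∀ w ∈ B', y + w = 0 → w = 0 := by
    intro y hy w hw hyw
    obtain ⟨hwB, hawA⟩ := mem_B'.1 hw
    obtain hy | hy := Finset.mem_union.1 hy
    · exact hAB y hy w hwB hyw
    obtain ⟨v, hv, rfl⟩ := Finset.mem_vadd_finset.1 hy
    have hsum : a + w + v = 0 := by rw [add_right_comm]; exact hyw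
    have hv0 : v = 0 := hAB _ hawA v hv hsum
    exact hAB a ha w hwB (by rwa [hv0, add_zero] at hsum)
  calc A.card + B.card = A'.card + B'.card := (Finset.addDysonETransform.card a (A, B)).symm
    _ ≤ (A' + B').card + 1 :=
        ih B' hssub (Finset.mem_union_left _ hA) (mem_B'.2 ⟨hB, by simpa using ha⟩) hzero
    _ ≤ (A + B).card + 1 :=
        Nat.add_le_add_right (Finset.card_le_card (Finset.addDysonETransform.subset a (A, B))) 1

theorem sum_card_lt_card_sum_insert_zero {ι : Type*} {s : Finset ι} {A : ι → Finset G}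
    (hA : ∀ i ∈ s, 0 ∉ A i)
    (hzero : ∀ g : ι → G, (∀ i ∈ s, g i ∈ insert 0 (A i)) → ∑ i ∈ s, g i = 0 →
      ∀ i ∈ s, g i = 0) :
    ∑ i ∈ s, (A i).card < (∑ i ∈ s, insert 0 (A i)).card := by
  classical
  induction s using Finset.induction_on with
  | empty => simp
  | insert j s hj ih =>
    have extend {g : ι → G} (hg : ∀ i ∈ s, g i ∈ insert 0 (A i)) {a : G}
        (ha : a ∈ insert 0 (A j)) (hsum : a + ∑ i ∈ s, g i = 0) : a = 0 ∧ ∀ i ∈ s, g i = 0 := by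
      have hupdate {i : ι} (hi : i ∈ s) : Function.update g j a i = g i :=
        Function.update_of_ne (ne_of_mem_of_not_mem hi hj) a g
      have := hzero (Function.update g j a)
        (Finset.forall_mem_insert _ _ _ |>.2
          ⟨by rwa [Function.update_self], fun i hi ↦ by rw [hupdate hi]; exact hg i hi⟩)
        (by rwa [Finset.sum_insert hj, Function.update_self, Finset.sum_update_of_notMem hj])
      rw [Finset.forall_mem_insert, Function.update_self] at this
      exact ⟨this.1, fun i hi ↦ hupdate hi ▸ this.2 i hi⟩
    have hs := ih (fun i hi ↦ hA i (Finset.mem_insert_of_mem hi)) fun g hg hsum ↦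
      (extend hg (Finset.mem_insert_self 0 _) (by rwa [zero_add])).2
    have hzero_mem : (0 : G) ∈ ∑ i ∈ s, insert 0 (A i) :=
      mem_sum_finset.2 ⟨0, by simp, by simp⟩
    have hscherk := card_add_card_le_card_add_add_one (Finset.mem_insert_self 0 (A j)) hzero_mem
      fun a ha b hb hab ↦ by
        obtain ⟨g, hg, rfl⟩ := mem_sum_finset.1 hb
        exact Finset.sum_eq_zero (extend hg ha hab).2
    rw [Finset.card_insert_of_notMem (hA j (Finset.mem_insert_self j s))] at hscherk
    rw [Finset.sum_insert hj, Finset.sum_insert hj]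
    lia

end Sumset

/-- `IsDavenportBound M d` says that every sequence over the monoid `M` of length at least `d` is
reducible, that is, `D(M) ≤ d`. Here the empty sequence has sum `0`, so that over a group reducible
means having a nonempty zero-sum subsequence. -/
def IsDavenportBound (M : Type*) [AddCommMonoid M] (d : ℕ) : Prop :=
  ∀ T : Multiset M, d ≤ T.card → ∃ B < T, B.sum = T.sum

section DavenportBound

variable {M : Type*} [AddCommMonoid M]

theorem IsDavenportBound.pos {d : ℕ} (hd : IsDavenportBound M d) : 0 < d := by
  by_contra! hd0
  obtain ⟨B, hB, -⟩ := hd 0 hd0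
  exact not_lt_bot hB

theorem IsDavenportBound.exists_card_lt_sum_eq {d : ℕ} (hd : IsDavenportBound M d)
    (T : Multiset M) : ∃ A ≤ T, A.card < d ∧ A.sum = T.sum := by
  induction T using Multiset.strongInductionOn with
  | ih T ih =>
  obtain hT | hT := lt_or_ge T.card d
  · exact ⟨T, le_rfl, hT, rfl⟩
  · obtain ⟨B, hBT, hB⟩ := hd T hT
    obtain ⟨A, hAB, hAd, hA⟩ := ih B hBT
    exact ⟨A, hAB.trans hBT.le, hAd, hA.trans hB⟩

/-- The sums of the initial segments of a sequence cannot all be distinct once there are more than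
`|M|` of them. -/
theorem isDavenportBound_natCard [Finite M] : IsDavenportBound M (Nat.card M) := by
  intro T hT
  have := Fintype.ofFinite M
  obtain ⟨l, rfl⟩ := Quot.exists_rep T
  change Nat.card M ≤ l.length at hT
  obtain ⟨i, j, hij, hsum⟩ : ∃ i j : Fin (l.length + 1), i < j ∧
      (l.take i).sum = (l.take j).sum := by
    obtain ⟨i, j, hij, hsum⟩ := Fintype.exists_ne_map_eq_of_card_lt
      (fun i : Fin (l.length + 1) ↦ (l.take i).sum)
      (by rw [Fintype.card_fin, ← Nat.card_eq_fintype_card]; lia)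
    obtain hlt | hgt := hij.lt_or_gt
    exacts [⟨i, j, hlt, hsum⟩, ⟨j, i, hgt, hsum.symm⟩]
  have hsub : (l.take i ++ l.drop j).Sublist l := by
    conv_rhs => rw [← List.take_append_drop j l]
    exact (List.take_sublist_take_left hij.le).append_right _
  refine ⟨(l.take i ++ l.drop j : List M), Multiset.coe_le.2 hsub.subperm |>.lt_of_ne ?_, ?_⟩
  · intro h
    have := congrArg Multiset.card h
    simp at this
    lia
  · change ((l.take i ++ l.drop j : List M) : Multiset M).sum = (l : Multiset M).sum
    rw [Multiset.sum_coe, Multiset.sum_coe, List.sum_append, hsum, ← List.sum_append,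
      List.take_append_drop]

end DavenportBound

section ZeroSum

open scoped Pointwise

variable {G : Type*} [AddCommGroup G]

theorem exists_zero_sum_card_le [Finite G] [DecidableEq G] {W : Multiset G} {h : ℕ}
    (hW : ∀ g, W.count g ≤ h) (hcard : Nat.card G ≤ W.card) :
    ∃ V ≤ W, V ≠ 0 ∧ V.sum = 0 ∧ V.card ≤ h := by
  have := Fintype.ofFinite G
  by_cases h0 : 0 ∈ W
  · exact ⟨{0}, Multiset.singleton_le.2 h0, by simp, by simp,
      (Multiset.one_le_count_iff_mem.2 h0).trans (hW 0)⟩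
  let A (i : ℕ) : Finset G := {a ∈ W.toFinset | i < W.count a}
  have mem_A {i : ℕ} {a : G} (ha : a ∈ A i) : i < W.count a := (Finset.mem_filter.1 ha).2
  obtain ⟨g, hgA, hgsum, j, hj, hgj⟩ : ∃ g : ℕ → G,
      (∀ i ∈ Finset.range h, g i ∈ insert 0 (A i)) ∧ ∑ i ∈ Finset.range h, g i = 0 ∧
        ∃ j ∈ Finset.range h, g j ≠ 0 := by
    by_contra! hzero
    refine (Finset.card_le_univ (∑ i ∈ Finset.range h, insert 0 (A i))).not_gt ?_
    calc Fintype.card G ≤ W.card := by rwa [← Nat.card_eq_fintype_card]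
      _ = ∑ i ∈ Finset.range h, (A i).card := (sum_card_filter_lt_count hW).symm
      _ < _ := sum_card_lt_card_sum_insert_zero
        (fun i _ h ↦ h0 (Multiset.mem_toFinset.1 (Finset.mem_filter.1 h).1)) hzero
  let I : Finset ℕ := {i ∈ Finset.range h | g i ≠ 0}
  refine ⟨I.val.map g, ?_, ?_, ?_, ?_⟩
  · rw [Multiset.le_iff_count]
    intro a
    have hsub : {i ∈ I | a = g i} ⊆ Finset.range (W.count a) := by
      intro i hi
      obtain ⟨hiI, rfl⟩ := Finset.mem_filter.1 hi
      obtain ⟨hih, hgi⟩ := Finset.mem_filter.1 hiI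
      exact Finset.mem_range.2 (mem_A ((Finset.mem_insert.1 (hgA i hih)).resolve_left hgi))
    rw [Multiset.count_map]
    exact (Finset.card_le_card hsub).trans_eq (Finset.card_range _)
  · have hjI : j ∈ I := Finset.mem_filter.2 ⟨hj, hgj⟩
    simpa using Finset.ne_empty_of_mem hjI
  · exact (Finset.sum_filter_ne_zero _).trans hgsum
  · rw [Multiset.card_map]
    exact (Finset.card_filter_le _ _).trans_eq (Finset.card_range h)

theorem exists_zero_sum_card_le_le_card_add [Finite G] [DecidableEq G] {Z : Multiset G}
    {n h : ℕ} (hn : Nat.card G ≤ n) (hZ : Z.sum = 0) (hcount : ∀ g, Z.count g ≤ h)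
    (hcard : n ≤ Z.card + h) : ∃ V ≤ Z, V.sum = 0 ∧ V.card ≤ n ∧ n ≤ V.card + h := by
  induction Z using Multiset.strongInductionOn with
  | ih Z ih =>
  obtain hZn | hZn := le_or_gt Z.card n
  · exact ⟨Z, le_rfl, hZ, hZn, hcard⟩
  obtain ⟨U, hUZ, hU0, hUsum, hUh⟩ := exists_zero_sum_card_le hcount (hn.trans hZn.le)
  obtain ⟨R, rfl⟩ := Multiset.le_iff_exists_add.1 hUZ
  rw [Multiset.card_add] at hZn
  rw [Multiset.sum_add, hUsum, zero_add] at hZ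
  have hRZ : R ≤ U + R := Multiset.le_add_left R U
  obtain ⟨V, hVR, hV⟩ := ih R (lt_add_of_pos_left R (pos_iff_ne_zero.2 hU0)) hZ
    (fun g ↦ (Multiset.count_le_of_le g hRZ).trans (hcount g)) (by lia)
  exact ⟨V, hVR.trans hRZ, hV⟩

theorem IsDavenportBound.exists_zero_sum_card_eq_of_count_le [Finite G] [DecidableEq G] {d n : ℕ}
    (hd : IsDavenportBound G d) (hn : Nat.card G ≤ n) {T : Multiset G}
    (hcount : ∀ g, T.count g ≤ T.count 0) (hT : n + d ≤ T.card + 1) :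
    ∃ V ≤ T, V.sum = 0 ∧ V.card = n := by
  obtain ⟨W, hTW⟩ : ∃ W, T = Multiset.replicate (T.count 0) 0 + W :=
    Multiset.le_iff_exists_add.1 (Multiset.le_count_iff_replicate_le.1 le_rfl)
  obtain ⟨A, hAW, hAd, hA⟩ := hd.exists_card_lt_sum_eq W
  obtain ⟨Z, rfl⟩ := Multiset.le_iff_exists_add.1 hAW
  have hZT : Z ≤ T := by
    rw [hTW, ← add_assoc]
    exact Multiset.le_add_left _ _
  have hcard := congrArg Multiset.card hTW
  simp only [Multiset.card_add, Multiset.card_replicate] at hcard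
  obtain ⟨V, hVZ, hV, hVn, hnV⟩ := exists_zero_sum_card_le_le_card_add hn (by simpa using hA)
    (fun g ↦ (Multiset.count_le_of_le g hZT).trans (hcount g)) (by lia)
  refine ⟨Multiset.replicate (n - V.card) 0 + V, ?_, by simp [hV], by simp; lia⟩
  rw [hTW]
  exact add_le_add (Multiset.replicate_le_replicate 0 |>.2 (by lia))
    (hVZ.trans (Multiset.le_add_left _ _))

/-- Gao's theorem. Its hypotheses and its conclusion are invariant under translation, which lets us
assume that `0` is the most frequent term; the zeros then pad a zero-sum subsequence to length
`n`. -/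
theorem IsDavenportBound.exists_zero_sum_card_eq [Finite G] {d n : ℕ}
    (hd : IsDavenportBound G d) (hn : Nat.card G ≤ n) (hexp : ∀ g : G, n • g = 0)
    {T : Multiset G} (hT : n + d ≤ T.card + 1) : ∃ V ≤ T, V.sum = 0 ∧ V.card = n := by
  classical
  obtain ⟨c, hc⟩ := Finite.exists_max fun g ↦ T.count g
  have hcount (g : G) : (T.map (· - c)).count g = T.count (g + c) := by
    simpa using Multiset.count_map_eq_count' (· - c) T sub_left_injective (g + c)
  obtain ⟨V, hV, hVsum, hVcard⟩ := hd.exists_zero_sum_card_eq_of_count_le hn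
    (T := T.map (· - c)) (fun g ↦ by simpa only [hcount, zero_add] using hc (g + c))
    (by rwa [Multiset.card_map])
  obtain ⟨V', hV'T, rfl⟩ := exists_le_map_eq_of_le_map hV
  rw [Multiset.card_map] at hVcard
  refine ⟨V', hV'T, ?_, hVcard⟩
  simpa [Multiset.sum_map_sub, hVcard, hexp] using hVsum

end ZeroSum

/-- An element `z` is absorbing if it is a zero element of the semigroup in the multiplicative
terminology, e.g. the zero of a nilsemigroup. -/
def IsAbsorbing {S : Type*} [Add S] (z : S) : Prop :=
  ∀ a, z + a = z

theorem IsAbsorbing.add_right {S : Type*} [Add S] {z : S} (hz : IsAbsorbing z) (a : S) :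
    IsAbsorbing (z + a) :=
  (hz a).symm ▸ hz

section Monoid

variable {M : Type*} [AddCommMonoid M]

theorem IsAbsorbing.of_add_eq_self {x c : M} (hxc : x + c = x) {n : ℕ}
    (hc : IsAbsorbing (n • c)) : IsAbsorbing x := by
  have hx (m : ℕ) : x + m • c = x := by
    induction m with
    | zero => rw [zero_nsmul, add_zero]
    | succ m ih => rw [succ_nsmul, ← add_assoc, ih, hxc]
  rw [← hx n, add_comm]
  exact hc.add_right x

theorem sum_map_addUnits_val (U : Multiset (AddUnits M)) :
    (U.map ((↑) : AddUnits M → M)).sum = ↑U.sum :=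
  (map_multiset_sum (AddUnits.coeHom M) U).symm

theorem exists_eq_add_map_addUnits_val (T : Multiset M) :
    ∃ (N : Multiset M) (U : Multiset (AddUnits M)),
      (∀ s ∈ N, ¬IsAddUnit s) ∧ T = N + U.map (↑) := by
  classical
  have : CanLift M (AddUnits M) (↑) IsAddUnit := ⟨fun _ h ↦ h⟩
  obtain ⟨U, hU⟩ : ∃ U : Multiset (AddUnits M), U.map (↑) = T.filter IsAddUnit :=
    CanLift.prf (T.filter IsAddUnit) fun _ hs ↦ (Multiset.mem_filter.1 hs).2
  exact ⟨T.filter (¬IsAddUnit ·), U, fun _ hs ↦ (Multiset.mem_filter.1 hs).2, by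
    rw [hU, add_comm, Multiset.filter_add_not]⟩

theorem isAddUnit_sum_iff {T : Multiset M} : IsAddUnit T.sum ↔ ∀ s ∈ T, IsAddUnit s := by
  rw [← Multiset.sum_toList, List.sum_isAddUnit_iff]
  simp only [Multiset.mem_toList]

theorem IsDavenportBound.exists_sum_add_sum_eq {d : ℕ} (hd : IsDavenportBound M d)
    {T : Multiset M} (hT : d ≤ T.card) : ∃ C ≤ T, C ≠ 0 ∧ T.sum + C.sum = T.sum := by
  obtain ⟨B, hBT, hB⟩ := hd T hT
  obtain ⟨C, rfl⟩ := Multiset.le_iff_exists_add.1 hBT.le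
  refine ⟨C, Multiset.le_add_left _ _, ?_, ?_⟩
  · rintro rfl
    exact hBT.ne (add_zero B).symm
  · conv_lhs => rw [← hB]
    rw [Multiset.sum_add]

theorem IsDavenportBound.quotient_stabilizer {N : Multiset M} {d : ℕ}
    (hd : IsDavenportBound M (N.card + d))
    (hnil : ∀ s : M, ¬IsAddUnit s → ∃ n : ℕ, IsAbsorbing (n • s))
    (hN : ∀ s ∈ N, ¬IsAddUnit s) (hNsum : ¬IsAbsorbing N.sum) :
    IsDavenportBound (AddUnits M ⧸ AddAction.stabilizer (AddUnits M) N.sum) d := by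
  intro W hW
  obtain ⟨U, rfl⟩ := Multiset.map_surjective_of_surjective (QuotientAddGroup.mk'_surjective _) W
  obtain ⟨C, hC, hC0, hCsum⟩ := hd.exists_sum_add_sum_eq (T := N + U.map (↑)) (by simpa using hW)
  replace hCsum : N.sum + C.sum = N.sum := by
    rwa [Multiset.sum_add, sum_map_addUnits_val, add_right_comm, AddUnits.add_left_inj] at hCsum
  have hCunit : IsAddUnit C.sum := by
    by_contra hCunit
    obtain ⟨n, hn⟩ := hnil _ hCunit
    exact hNsum (.of_add_eq_self hCsum hn)
  have hCN : Disjoint C N := Multiset.disjoint_left.2 fun hsC hsN ↦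
    hN _ hsN (isAddUnit_sum_iff.1 hCunit _ hsC)
  obtain ⟨V, hVU, rfl⟩ := exists_le_map_eq_of_le_map (le_of_le_add_of_disjoint hCN hC)
  obtain ⟨R, rfl⟩ := Multiset.le_iff_exists_add.1 hVU
  have hV : QuotientAddGroup.mk' (AddAction.stabilizer (AddUnits M) N.sum) V.sum = 0 := by
    rw [sum_map_addUnits_val, add_comm] at hCsum
    exact (QuotientAddGroup.eq_zero_iff _).2 hCsum
  refine ⟨R.map (QuotientAddGroup.mk' _), Multiset.map_lt_map ?_, ?_⟩
  · exact lt_add_of_pos_left R (pos_iff_ne_zero.2 fun h ↦ hC0 (by rw [h, Multiset.map_zero]))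
  · rw [← map_multiset_sum, ← map_multiset_sum, Multiset.sum_add, map_add, hV, zero_add]

theorem IsDavenportBound.exists_card_add_eq_of_isAbsorbing {d n : ℕ} (hd : IsDavenportBound M d)
    {T : Multiset M} (hT : n + d ≤ T.card + 1) (hTsum : IsAbsorbing T.sum) :
    ∃ B ≤ T, B.card + n = T.card ∧ B.sum = T.sum := by
  obtain ⟨A, hAT, hAd, hA⟩ := hd.exists_card_lt_sum_eq T
  obtain ⟨B, hAB, hBT, hB⟩ := exists_le_le_card_eq hAT (m := T.card - n) (by lia) (by lia)
  obtain ⟨R, rfl⟩ := Multiset.le_iff_exists_add.1 hAB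
  exact ⟨A + R, hBT, by have := hd.pos; lia, by rw [Multiset.sum_add, hA, hTsum]⟩

/-- Let `x` be the sum of the non-units of `T`. Removing units from `T` does not change its sum as
soon as the sum of the removed units fixes `x`. If `x` is not absorbing, Gao's theorem for the group
of units modulo the stabilizer of `x` provides `n` such units. -/
theorem IsDavenportBound.exists_card_add_eq [Finite (AddUnits M)] {d n : ℕ}
    (hd : IsDavenportBound M d) (hnil : ∀ s : M, ¬IsAddUnit s → ∃ n : ℕ, IsAbsorbing (n • s))
    (hn : Nat.card (AddUnits M) ≤ n) (hexp : ∀ g : AddUnits M, n • g = 0)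
    {T : Multiset M} (hT : n + d ≤ T.card + 1) :
    ∃ B ≤ T, B.card + n = T.card ∧ B.sum = T.sum := by
  by_cases hTsum : IsAbsorbing T.sum
  · exact hd.exists_card_add_eq_of_isAbsorbing hT hTsum
  obtain ⟨N, U, hN, rfl⟩ := exists_eq_add_map_addUnits_val T
  have hNsum : ¬IsAbsorbing N.sum := fun h ↦ hTsum (by rw [Multiset.sum_add]; exact h.add_right _)
  obtain hNd | hNd := le_total d N.card
  · exact absurd (IsDavenportBound.quotient_stabilizer (d := 0) (fun T hT ↦ hd T (hNd.trans hT))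
      hnil hN hNsum).pos (lt_irrefl 0)
  obtain ⟨d, rfl⟩ := Nat.exists_eq_add_of_le hNd
  rw [Multiset.card_add, Multiset.card_map] at hT
  obtain ⟨W, hW, hWsum, hWcard⟩ := (hd.quotient_stabilizer hnil hN hNsum).exists_zero_sum_card_eq
    (n := n) ((Nat.card_le_card_of_surjective _ (QuotientAddGroup.mk'_surjective _)).trans hn)
    (QuotientAddGroup.mk'_surjective _ |>.forall.2 fun g ↦ by rw [← map_nsmul, hexp, map_zero])
    (T := U.map (QuotientAddGroup.mk' _)) (by rw [Multiset.card_map]; lia)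
  obtain ⟨V, hVU, rfl⟩ := exists_le_map_eq_of_le_map hW
  obtain ⟨R, rfl⟩ := Multiset.le_iff_exists_add.1 hVU
  have hV : ↑V.sum + N.sum = N.sum := by
    rw [← map_multiset_sum] at hWsum
    exact (QuotientAddGroup.eq_zero_iff _).1 hWsum
  rw [Multiset.card_map] at hWcard
  refine ⟨N + R.map (↑), ?_, ?_, ?_⟩
  · gcongr
    exact Multiset.le_add_left _ _
  · simp only [Multiset.card_add, Multiset.card_map]
    lia
  · rw [Multiset.map_add, Multiset.sum_add, Multiset.sum_add, Multiset.sum_add,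
      sum_map_addUnits_val V, ← add_assoc, add_comm N.sum V.sum, hV]

end Monoid

section WithIdentity

variable (S : Type) [AddCommSemigroup S]

/-- The relation on `WithZero S` identifying the adjoined element `0` with the identity element of
`S`, if there is one. By definition, `EqSum A B` says that it relates `mSum A` and `mSum B`. -/
def identitySetoid : Setoid (WithZero S) where
  r x y := x = y ∨ ∃ e : S, (∀ a, e + a = a) ∧ (x = 0 ∧ y = e ∨ x = e ∧ y = 0)
  iseqv :=
    { refl := fun _ ↦ .inl rfl
      symm := by
        rintro x y (rfl | ⟨e, he, ⟨rfl, rfl⟩ | ⟨rfl, rfl⟩⟩)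
        exacts [.inl rfl, .inr ⟨e, he, .inr ⟨rfl, rfl⟩⟩, .inr ⟨e, he, .inl ⟨rfl, rfl⟩⟩]
      trans := by
        rintro x y z (rfl | ⟨e, he, ⟨rfl, rfl⟩ | ⟨rfl, rfl⟩⟩) hyz
        · exact hyz
        · obtain rfl | ⟨f, -, ⟨h, rfl⟩ | ⟨-, rfl⟩⟩ := hyz
          · exact .inr ⟨e, he, .inl ⟨rfl, rfl⟩⟩
          · exact absurd h WithZero.coe_ne_zero
          · exact .inl rfl
        · obtain rfl | ⟨f, hf, ⟨-, rfl⟩ | ⟨h, rfl⟩⟩ := hyz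
          · exact .inr ⟨e, he, .inr ⟨rfl, rfl⟩⟩
          · rw [← he f, add_comm, hf]
            exact .inl rfl
          · exact absurd h.symm WithZero.coe_ne_zero }

theorem identitySetoid_add_right {x y : WithZero S} (h : identitySetoid S x y) (t : WithZero S) :
    identitySetoid S (x + t) (y + t) := by
  obtain rfl | ⟨e, he, h⟩ := h
  · exact .inl rfl
  induction t using WithZero.recZeroCoe with
  | zero => exact .inr ⟨e, he, by simpa only [add_zero] using h⟩
  | coe s =>
    refine .inl ?_
    obtain ⟨rfl, rfl⟩ | ⟨rfl, rfl⟩ := h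
    · rw [zero_add, ← WithZero.coe_add, he]
    · rw [zero_add, ← WithZero.coe_add, he]

/-- The relation `identitySetoid S` as a congruence. -/
def identityCon : AddCon (WithZero S) where
  __ := identitySetoid S
  add' {w x y z} hwx hyz := by
    have hyz' : identitySetoid S (x + y) (x + z) := by
      rw [add_comm x, add_comm x]
      exact identitySetoid_add_right S hyz x
    exact (identitySetoid S).trans (identitySetoid_add_right S hwx y) hyz'

/-- The monoid `S¹` of semigroup theory: `S` itself if it has an identity element, and `S` with an
identity element adjoined otherwise. -/
abbrev WithIdentity : Type :=
  (identityCon S).Quotient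

namespace WithIdentity

variable {S}

/-- The canonical embedding of `S` into `S¹`. -/
def of : S →ₙ+ WithIdentity S :=
  ((identityCon S).mk' : WithZero S →+ WithIdentity S).toAddHom.comp WithZero.coeAddHom

instance [Finite S] : Finite (WithIdentity S) :=
  have : Finite (WithZero S) := inferInstanceAs (Finite (Option S))
  Quotient.finite _

instance [Finite S] : Finite (AddUnits (WithIdentity S)) :=
  .of_injective _ AddUnits.val_injective

theorem eq_zero_or_exists_of (m : WithIdentity S) : m = 0 ∨ ∃ s : S, of s = m := by
  induction m using AddCon.induction_on with | H x =>
  induction x using WithZero.recZeroCoe with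
  | zero => exact .inl rfl
  | coe s => exact .inr ⟨s, rfl⟩

theorem of_eq_zero_iff {s : S} : of s = 0 ↔ ∀ a, s + a = a := by
  refine (identityCon S).eq.trans ⟨?_, fun hs ↦ .inr ⟨s, hs, .inr ⟨rfl, rfl⟩⟩⟩
  rintro (h | ⟨e, he, ⟨h, -⟩ | ⟨h, -⟩⟩)
  · exact absurd h WithZero.coe_ne_zero
  · exact absurd h WithZero.coe_ne_zero
  · rwa [WithZero.coe_inj.1 h]

theorem eqSum_iff {A B : Multiset S} : EqSum A B ↔ (A.map of).sum = (B.map of).sum := by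
  have hmk (A : Multiset S) : (A.map of).sum = (identityCon S).mk' (mSum A) := by
    rw [mSum, map_multiset_sum]
    -- In `mSum` the coercion to `WithZero S` is elaborated as a bind in the multiset monad.
    simp only [Multiset.bind_def, Multiset.pure_def, Multiset.bind_singleton, Multiset.map_map]
    rfl
  rw [hmk, hmk]
  exact (identityCon S).eq.symm

theorem reducible_iff {T : Multiset S} :
    Reducible T ↔ ∃ B < T.map of, B.sum = (T.map of).sum := by
  constructor
  · rintro ⟨B, hBT, hB⟩
    exact ⟨B.map of, Multiset.map_lt_map hBT, eqSum_iff.1 hB⟩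
  · rintro ⟨B, hBT, hB⟩
    obtain ⟨B, hB', rfl⟩ := exists_le_map_eq_of_le_map hBT.le
    exact ⟨B, hB'.lt_of_ne fun h ↦ hBT.ne (by rw [h]), eqSum_iff.2 hB⟩

theorem isDavenportBound_iff {d : ℕ} :
    IsDavenportBound (WithIdentity S) d ↔ ∀ T : Multiset S, d ≤ T.card → Reducible T := by
  classical
  refine ⟨fun hd T hT ↦ reducible_iff.2 (hd _ (by rwa [Multiset.card_map])), fun hd T hT ↦ ?_⟩
  by_cases h0 : 0 ∈ T
  · exact ⟨T.erase 0, Multiset.erase_lt.2 h0, by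
      conv_rhs => rw [← Multiset.cons_erase h0, Multiset.sum_cons, zero_add]⟩
  · have : CanLift (WithIdentity S) S of (· ≠ 0) :=
      ⟨fun m hm ↦ (eq_zero_or_exists_of m).resolve_left hm⟩
    lift T to Multiset S using fun m hm ↦ ne_of_mem_of_not_mem hm h0
    exact reducible_iff.1 (hd T (by rwa [Multiset.card_map] at hT))

theorem isDavenportBound_davC [Finite S] : IsDavenportBound (WithIdentity S) (DavC S) :=
  isDavenportBound_iff.2 (Nat.sInf_mem
    (s := {d | ∀ T : Multiset S, d ≤ T.card → Reducible T})
    ⟨_, isDavenportBound_iff.1 isDavenportBound_natCard⟩)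

theorem natCard_addUnits_le [Finite S] [Nonempty S] :
    Nat.card (AddUnits (WithIdentity S)) ≤ Nat.card S := by
  by_cases he : ∃ e : S, of e = 0
  · obtain ⟨e, he⟩ := he
    have hsurj : Function.Surjective (of : S → WithIdentity S) := fun m ↦
      (eq_zero_or_exists_of m).elim (fun hm ↦ ⟨e, he.trans hm.symm⟩) id
    exact (Nat.card_le_card_of_injective _ AddUnits.val_injective).trans
      (Nat.card_le_card_of_surjective _ hsurj)
  · push Not at he
    have hunit (u : AddUnits (WithIdentity S)) : u = 0 := by
      obtain hu | ⟨s, hs⟩ := eq_zero_or_exists_of (u : WithIdentity S)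
      · exact AddUnits.ext hu
      have hsu : of s + ↑(-u) = 0 := by rw [hs, AddUnits.add_neg]
      obtain hv | ⟨t, ht⟩ := eq_zero_or_exists_of (↑(-u) : WithIdentity S)
      · exact absurd (by rwa [hv, add_zero] at hsu) (he s)
      · exact absurd (by rwa [← ht, ← map_add] at hsu) (he (s + t))
    have : Subsingleton (AddUnits (WithIdentity S)) := ⟨fun u v ↦ by rw [hunit u, hunit v]⟩
    exact (Finite.card_le_one_iff_subsingleton.2 this).trans Nat.card_pos

theorem of_rep (a : S) (n : ℕ) : of (rep a n) = (n + 1) • of a := by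
  induction n with
  | zero => rw [zero_add, one_nsmul]; rfl
  | succ n ih => rw [succ_nsmul, ← ih, ← map_add]; rfl

end WithIdentity

theorem IsAbsorbing.of {z : S} (hz : IsAbsorbing z) : IsAbsorbing (WithIdentity.of z) := by
  intro m
  obtain rfl | ⟨s, rfl⟩ := WithIdentity.eq_zero_or_exists_of m
  · exact add_zero _
  · rw [← map_add, hz]

end WithIdentity

section Period

variable {S : Type} [AddCommSemigroup S]

theorem rep_add_rep (a : S) (i j : ℕ) : rep a i + rep a j = rep a (i + j + 1) := by
  induction j with
  | zero => rfl
  | succ j ih =>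
    change rep a i + (rep a j + a) = rep a (i + j + 1) + a
    rw [← add_assoc, ih]

theorem exists_rep_add_rep_eq [Finite S] (a : S) : ∃ k, rep a k + rep a k = rep a k := by
  let _ : TopologicalSpace S := ⊥
  have : DiscreteTopology S := ⟨rfl⟩
  obtain ⟨_, ⟨k, rfl⟩, hk⟩ := exists_idempotent_in_compact_add_subsemigroup
    (fun _ ↦ continuous_of_discreteTopology) (Set.range (rep a)) (Set.range_nonempty _)
    (Set.toFinite _).isCompact <| by
      rintro _ ⟨i, rfl⟩ _ ⟨j, rfl⟩
      exact ⟨_, (rep_add_rep a i j).symm⟩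
  exact ⟨k, hk⟩

theorem period_spec [Finite S] (a : S) :
    0 < period a ∧ ∃ k, rep a (k + period a) = rep a k := by
  obtain ⟨k, hk⟩ := exists_rep_add_rep_eq a
  rw [rep_add_rep] at hk
  exact Nat.sInf_mem (s := {t | 0 < t ∧ ∃ k, rep a (k + t) = rep a k}) ⟨k + 1, by lia, k, hk⟩

theorem WithIdentity.exists_isAbsorbing_nsmul [Finite S]
    (hidem : ∀ e : S, e + e = e → (∀ a, e + a = a) ∨ IsAbsorbing e) {m : WithIdentity S}
    (hm : ¬IsAddUnit m) : ∃ n : ℕ, IsAbsorbing (n • m) := by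
  obtain rfl | ⟨s, rfl⟩ := eq_zero_or_exists_of m
  · exact absurd isAddUnit_zero hm
  obtain ⟨k, hk⟩ := exists_rep_add_rep_eq s
  obtain he | he := hidem _ hk
  · rw [← of_eq_zero_iff, of_rep, succ_nsmul] at he
    exact absurd (.of_add_eq_zero_right _ he) hm
  · exact ⟨k + 1, of_rep s k ▸ he.of⟩

variable [Fintype S]

theorem card_le_kappa : Fintype.card S ≤ kappa S := by
  have hexp : 0 < expS S := by
    refine Nat.pos_of_ne_zero fun h ↦ ?_
    obtain ⟨a, -, ha⟩ := Finset.lcm_eq_zero_iff.1 h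
    exact (period_spec a).1.ne' ha
  rw [kappa, mul_comm, ← Nat.ceilDiv_eq_add_pred_div]
  exact le_smul_ceilDiv hexp

theorem period_dvd_kappa (a : S) : period a ∣ kappa S :=
  (Finset.dvd_lcm (Finset.mem_univ a)).trans (dvd_mul_left _ _)

theorem WithIdentity.kappa_nsmul_addUnits (u : AddUnits (WithIdentity S)) : kappa S • u = 0 := by
  obtain hu | ⟨a, ha⟩ := eq_zero_or_exists_of (u : WithIdentity S)
  · rw [show u = 0 from AddUnits.ext hu, nsmul_zero]
  obtain ⟨-, k, hk⟩ := period_spec a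
  have hperiod : period a • u = 0 := by
    have hk' : (k + period a + 1) • u = (k + 1) • u := by
      ext
      rw [AddUnits.val_nsmul_eq_nsmul_val, AddUnits.val_nsmul_eq_nsmul_val, ← ha, ← of_rep,
        ← of_rep, hk]
    rwa [add_right_comm, add_nsmul, add_eq_left] at hk'
  obtain ⟨c, hc⟩ := period_dvd_kappa a
  rw [hc, mul_nsmul, hperiod, nsmul_zero]

end Period

section ReesCongruence

variable {S : Type*} [AddCommSemigroup S]

/-- The Rees congruence of the principal ideal `e + S` of an idempotent `e`, which collapses this
ideal to a point. The ideal is encoded as `{x | e + x = x}`. -/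
def reesAddCon (e : S) : AddCon S where
  r x y := x = y ∨ e + x = x ∧ e + y = y
  iseqv :=
    { refl := fun _ ↦ .inl rfl
      symm := .imp Eq.symm And.symm
      trans := by
        rintro x y z (rfl | ⟨hx, hy⟩) (rfl | ⟨hy', hz⟩)
        exacts [.inl rfl, .inr ⟨hy', hz⟩, .inr ⟨hx, hy⟩, .inr ⟨hx, hz⟩] }
  add' := by
    rintro w x y z (rfl | ⟨hw, hx⟩) (rfl | ⟨hy, hz⟩)
    · exact .inl rfl
    · exact .inr ⟨by rw [add_left_comm, hy], by rw [add_left_comm, hz]⟩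
    · exact .inr ⟨by rw [← add_assoc, hw], by rw [← add_assoc, hx]⟩
    · exact .inr ⟨by rw [← add_assoc, hw], by rw [← add_assoc, hx]⟩

/-- Translation by an idempotent, an endomorphism of the semigroup. -/
def addLeftHom {e : S} (he : e + e = e) : S →ₙ+ S where
  toFun x := e + x
  map_add' x y := by rw [add_add_add_comm, he]

theorem ker_addLeftHom_inf_reesAddCon {e : S} (he : e + e = e) :
    AddCon.ker (addLeftHom he) ⊓ reesAddCon e = ⊥ := by
  refine le_bot_iff.1 fun x y hxy ↦ ?_
  obtain ⟨hker, rfl | ⟨hx, hy⟩⟩ := hxy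
  · rfl
  · exact hx.symm.trans (hker.trans hy)

end ReesCongruence

end EGZ

namespace SubdirectlyIrreducible

variable {S : Type} [AddCommSemigroup S]

theorem nonempty (hS : SubdirectlyIrreducible S) : Nonempty S := by
  by_contra hempty
  rw [not_nonempty_iff] at hempty
  obtain ⟨i, -⟩ := hS Empty (fun _ ↦ PUnit) (fun _ _ ↦ PUnit.unit)
    (Function.injective_of_subsingleton _) (fun _ _ ↦ rfl) isEmptyElim
  exact i.elim

theorem eq_bot_or_eq_bot (hS : SubdirectlyIrreducible S) {c d : AddCon S} (hcd : c ⊓ d = ⊥) :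
    c = ⊥ ∨ d = ⊥ := by
  let con (b : Bool) : AddCon S := cond b c d
  obtain ⟨b, hb⟩ := hS Bool (fun b ↦ (con b).Quotient) (fun s b ↦ (s : (con b).Quotient))
    (fun x y hxy ↦ by
      have hxy' : (c ⊓ d) x y := ⟨c.eq.1 (congrFun hxy true), d.eq.1 (congrFun hxy false)⟩
      rwa [hcd] at hxy')
    (fun _ _ ↦ rfl) (fun b ↦ Quotient.mk_surjective)
  have hbot : con b = ⊥ := le_bot_iff.1 fun x y hxy ↦ hb ((con b).eq.2 hxy)
  cases b
  exacts [.inr hbot, .inl hbot]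

theorem isIdentity_or_isAbsorbing (hS : SubdirectlyIrreducible S) {e : S} (he : e + e = e) :
    (∀ a, e + a = a) ∨ EGZ.IsAbsorbing e := by
  obtain h | h := hS.eq_bot_or_eq_bot (EGZ.ker_addLeftHom_inf_reesAddCon he)
  · refine .inl fun a ↦ ?_
    have hrel : AddCon.ker (EGZ.addLeftHom he) (e + a) a := by
      change e + (e + a) = e + a
      rw [← add_assoc, he]
    rwa [h] at hrel
  · refine .inr fun a ↦ ?_
    have hrel : EGZ.reesAddCon e (e + a) e := .inr ⟨by rw [← add_assoc, he], he⟩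
    rwa [h] at hrel

end SubdirectlyIrreducible

theorem E_le_of_subdirectlyIrreducible_general (S : Type) [AddCommSemigroup S] [Fintype S]
    [Nonempty S] (hidem : ∀ e : S, e + e = e → (∀ a, e + a = a) ∨ EGZ.IsAbsorbing e) :
    EGZ.EC S ≤ EGZ.DavC S + EGZ.kappa S - 1 := by
  have hD := EGZ.WithIdentity.isDavenportBound_davC (S := S)
  have hDpos := hD.pos
  have hcard := EGZ.card_le_kappa (S := S)
  have hSpos := Fintype.card_pos (α := S)
  refine Nat.sInf_le ⟨by lia, fun T hT ↦ ?_⟩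
  obtain ⟨_, hBof, hBcard, hB⟩ := hD.exists_card_add_eq
    (fun _ hm ↦ EGZ.WithIdentity.exists_isAbsorbing_nsmul hidem hm)
    (EGZ.WithIdentity.natCard_addUnits_le.trans (Nat.card_eq_fintype_card.trans_le hcard))
    EGZ.WithIdentity.kappa_nsmul_addUnits (T := T.map EGZ.WithIdentity.of)
    (by rw [Multiset.card_map]; lia)
  obtain ⟨B, hBT, rfl⟩ := EGZ.exists_le_map_eq_of_le_map hBof
  rw [Multiset.card_map, Multiset.card_map] at hBcard
  exact ⟨B, hBT, by lia, EGZ.WithIdentity.eqSum_iff.2 hB⟩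

/-- For a finite subdirectly irreducible commutative semigroup `S`,
`E(S) ≤ D(S) + κ(S) − 1`. -/
theorem E_le_of_subdirectlyIrreducible (S : Type) [AddCommSemigroup S] [Fintype S]
    (hsi : SubdirectlyIrreducible S) :
    EGZ.EC S ≤ EGZ.DavC S + EGZ.kappa S - 1 :=
  have := hsi.nonempty
  E_le_of_subdirectlyIrreducible_general S fun _ ↦ hsi.isIdentity_or_isAbsorbing
end

section
/- Let S be a finite commutative semigroup with identity element 0_S, let T be an irreducible sequence over S of length D(S) − 1, and let U be the sequence consisting of κ(S) − 1 copies of 0_S. Then the sequence T·U of length D(S) + κ(S) − 2 contains no subsequence T' with |T·U| − |T'| = κ(S) and σ(T') = σ(T·U). -/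
/-!
Over a monoid, `EqSum` is equality of ordinary sums, since the empty sequence has sum `0_S`.
Deleting more than `|U|` terms from `T·U` leaves a sequence `B` with fewer than `|T|` terms. If `U`
consists of zeros, then `B - U` has the same sum as `B` and is a proper subsequence of `T`, so
`σ(B) = σ(T·U) = σ(T)` would make `T` reducible.
-/

namespace EGZ

theorem mSum_of_ne_zero {S : Type} [AddCommMonoid S] {A : Multiset S} (hA : A ≠ 0) :
    mSum A = (A.sum : WithZero S) := by
  simpa [mSum] using (map_multiset_ne_zero_sum (WithZero.coeAddHom (α := S)) hA).symm

theorem eqSum_iff_sum_eq {S : Type} [AddCommMonoid S] {A B : Multiset S} :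
    EqSum A B ↔ A.sum = B.sum := by
  have left_identity_iff (e : S) : (∀ a, e + a = a) ↔ e = 0 :=
    ⟨fun h => by simpa using h 0, by rintro rfl; exact zero_add⟩
  have mSum_empty : mSum (0 : Multiset S) = 0 := by simp [mSum]
  simp only [EqSum, left_identity_iff, exists_eq_left]
  rcases eq_or_ne A 0 with rfl | hA <;> rcases eq_or_ne B 0 with rfl | hB
  · simp
  · simp [mSum_empty, mSum_of_ne_zero hB, eq_comm]
  · simp [mSum_empty, mSum_of_ne_zero hA]
  · simp [mSum_of_ne_zero hA, mSum_of_ne_zero hB]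

theorem sum_sub_of_forall_eq_zero {M : Type*} [AddCommMonoid M] [DecidableEq M]
    (B : Multiset M) {U : Multiset M} (hU : ∀ u ∈ U, u = 0) : (B - U).sum = B.sum := by
  have inter_sum : (B ∩ U).sum = 0 :=
    Multiset.sum_eq_zero fun _ hu => hU _ (Multiset.mem_inter.1 hu).2
  calc (B - U).sum = (B - U).sum + (B ∩ U).sum := by rw [inter_sum, add_zero]
    _ = B.sum := by rw [← Multiset.sum_add, Multiset.sub_add_inter]

theorem sub_lt_of_le_add_of_card_lt {α : Type*} [DecidableEq α] {B T U : Multiset α}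
    (hB : B ≤ T + U) (hcard : B.card < T.card) : B - U < T := by
  refine lt_of_le_of_ne (Multiset.sub_le_iff_le_add.2 hB) fun h => ?_
  have card_sub_le : (B - U).card ≤ B.card := Multiset.card_le_card (Multiset.sub_le_self B U)
  exact (h ▸ card_sub_le).not_gt hcard

theorem period_pos {S : Type} [AddCommSemigroup S] [Finite S] (a : S) : 0 < period a := by
  obtain ⟨i, j, hij, h⟩ :=
    Set.finite_univ.exists_lt_map_eq_of_forall_mem fun n => Set.mem_univ (rep a n)
  have hperiod : j - i ∈ {t : ℕ | 0 < t ∧ ∃ k : ℕ, rep a (k + t) = rep a k} :=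
    ⟨Nat.sub_pos_of_lt hij, i, by rw [Nat.add_sub_cancel' hij.le, h]⟩
  exact (Nat.sInf_mem ⟨_, hperiod⟩).1

theorem expS_pos (S : Type) [AddCommSemigroup S] [Fintype S] : 0 < expS S := by
  refine Nat.pos_of_ne_zero fun h => ?_
  obtain ⟨a, -, ha⟩ := Finset.lcm_eq_zero_iff.1 h
  exact (period_pos a).ne' ha

theorem kappa_pos (S : Type) [AddCommSemigroup S] [Fintype S] [Nonempty S] : 0 < kappa S := by
  have hexp : 0 < expS S := expS_pos S
  have hcard : 0 < Fintype.card S := Fintype.card_pos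
  exact Nat.mul_pos (Nat.div_pos (by lia) hexp) hexp

end EGZ

theorem extremal_sequence_general {S : Type} [AddCommMonoid S] {T U : Multiset S}
    (hirr : ¬ EGZ.Reducible T) (hU : ∀ u ∈ U, u = 0) {k : ℕ} (hk : U.card < k) :
    ¬ ∃ B : Multiset S, B ≤ T + U ∧ (T + U).card - B.card = k ∧ EGZ.EqSum B (T + U) := by
  classical
  rintro ⟨B, hB, hcard, hsum⟩
  have hcard_lt : B.card < T.card := by rw [Multiset.card_add] at hcard; lia
  refine hirr ⟨B - U, EGZ.sub_lt_of_le_add_of_card_lt hB hcard_lt, EGZ.eqSum_iff_sum_eq.2 ?_⟩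
  calc (B - U).sum = B.sum := EGZ.sum_sub_of_forall_eq_zero B hU
    _ = (T + U).sum := EGZ.eqSum_iff_sum_eq.1 hsum
    _ = T.sum := by rw [Multiset.sum_add, Multiset.sum_eq_zero hU, add_zero]

/-- Let `S` be a finite commutative monoid, `T` an irreducible sequence
over `S` of length `D(S) − 1`, and `U` the sequence of `κ(S) − 1` copies of `0_S`.  Then
the sequence `T·U` (of length `D(S) + κ(S) − 2`) contains no subsequence `T'` with
`|T·U| − |T'| = κ(S)` and `σ(T') = σ(T·U)`. -/
theorem extremal_sequence (S : Type) [AddCommMonoid S] [Fintype S]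
    (T : Multiset S) (hirr : ¬ EGZ.Reducible T)
    (hlen : Multiset.card T = EGZ.DavC S - 1)
    (U : Multiset S) (hU : U = Multiset.replicate (EGZ.kappa S - 1) (0 : S)) :
    ¬ ∃ B : Multiset S, B ≤ T + U ∧
      Multiset.card (T + U) - Multiset.card B = EGZ.kappa S ∧ EGZ.EqSum B (T + U) := by
  subst hU
  exact extremal_sequence_general hirr (fun _ => Multiset.eq_of_mem_replicate)
    (by simpa using EGZ.kappa_pos S)
end
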